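/- arXiv:2602.23162 — 4 statements merged into one kernel-verified Lean document; each statement's English description precedes it below -/
import Mathlib

section
/- Let f : ℝ → ℝ be continuous and suppose there are constants p ≥ 2, κ ≥ 0 and α₁, α₂ > 0 such that −κ − α₂|s|^p ≤ f(s)·s ≤ κ − α₁|s|^p for all s ∈ ℝ. Define F(s) = ∫₀ˢ f(r) dr. Then there exist constants α̃₁, α̃₂ > 0 and κ̃ ≥ 0 such that −α̃₂|s|^p − κ̃ ≤ F(s) ≤ κ̃ − α̃₁|s|^p for all s ∈ ℝ, and consequently there exists C̃ > 0 with |F(s)| ≤ C̃(1 + |s|^p) for all s ∈ ℝ. -/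
/-!
For `s > 0` the upper bound reads `f s ≤ κ / s - α₁ * s ^ (p - 1)`, and the primitive of this
majorant on `[1, ∞)` is `κ * log s - (α₁ / p) * (s ^ p - 1)`. The logarithm is negligible against
`s ^ p` for every `p > 0`, so any coefficient below `α₁ / p` survives, while `[0, 1]` contributes
only a constant. Negating `f` and reflecting the variable reduce the lower bound and negative `s`
to this one estimate.
-/

open MeasureTheory

lemma exists_mul_log_le_add_mul_rpow {κ c p : ℝ} (hκ : 0 ≤ κ) (hc : 0 < c) (hp : 0 < p) :
    ∃ K : ℝ, ∀ s, 0 < s → κ * Real.log s ≤ K + c * s ^ p := by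
  rcases hκ.eq_or_lt with rfl | hκ
  · refine ⟨0, fun s hs ↦ ?_⟩
    rw [zero_mul, zero_add]
    positivity
  -- `log y ≤ y - 1` at `y = δ * s ^ p`, with `δ` chosen to produce the coefficient `c`.
  set δ := c * p / κ with hδ
  have hδ_pos : 0 < δ := by positivity
  refine ⟨-(κ / p) * (1 + Real.log δ), fun s hs ↦ ?_⟩
  have hsp : 0 < s ^ p := Real.rpow_pos_of_pos hs p
  have hlog : Real.log δ + p * Real.log s ≤ δ * s ^ p - 1 := by
    rw [← Real.log_rpow hs, ← Real.log_mul hδ_pos.ne' hsp.ne']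
    exact Real.log_le_sub_one_of_pos (mul_pos hδ_pos hsp)
  calc κ * Real.log s = κ / p * (p * Real.log s) := by field_simp
    _ ≤ κ / p * (δ * s ^ p - 1 - Real.log δ) := by gcongr; linarith
    _ = -(κ / p) * (1 + Real.log δ) + c * s ^ p := by rw [hδ]; field_simp; ring

lemma intervalIntegral_le_log_add_rpow {g : ℝ → ℝ} {κ a p r s : ℝ} (hp : p ≠ 0) (hr : 0 < r)
    (hrs : r ≤ s) (hg : IntervalIntegrable g volume r s)
    (hbound : ∀ x ∈ Set.Icc r s, g x * x ≤ κ + a * x ^ p) :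
    ∫ x in r..s, g x ≤ κ * Real.log (s / r) + a / p * (s ^ p - r ^ p) := by
  have hs : 0 < s := hr.trans_le hrs
  have hzero : (0 : ℝ) ∉ Set.uIcc r s := Set.notMem_uIcc_of_lt hr hs
  have hinv : IntervalIntegrable (fun x : ℝ ↦ κ * x⁻¹) volume r s :=
    (intervalIntegral.intervalIntegrable_inv (fun x hx h ↦ hzero (h ▸ hx))
      continuousOn_id).const_mul κ
  have hpow : IntervalIntegrable (fun x : ℝ ↦ a * x ^ (p - 1)) volume r s :=
    (intervalIntegral.intervalIntegrable_rpow (.inr hzero)).const_mul a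
  have hpointwise : ∀ x ∈ Set.Icc r s, g x ≤ κ * x⁻¹ + a * x ^ (p - 1) := fun x hx ↦ by
    have hx_pos : 0 < x := hr.trans_le hx.1
    calc g x ≤ (κ + a * x ^ p) / x := (le_div_iff₀ hx_pos).2 (hbound x hx)
      _ = κ * x⁻¹ + a * x ^ (p - 1) := by rw [Real.rpow_sub_one hx_pos.ne']; ring
  calc ∫ x in r..s, g x
      ≤ ∫ x in r..s, (κ * x⁻¹ + a * x ^ (p - 1)) :=
        intervalIntegral.integral_mono_on hrs hg (hinv.add hpow) hpointwise
    _ = κ * Real.log (s / r) + a / p * (s ^ p - r ^ p) := by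
        rw [intervalIntegral.integral_add hinv hpow, intervalIntegral.integral_const_mul,
          intervalIntegral.integral_const_mul, integral_inv_of_pos hr hs,
          integral_rpow (.inr ⟨by simpa [sub_eq_iff_eq_add] using hp, hzero⟩), sub_add_cancel]
        ring

lemma exists_intervalIntegral_le_add_mul_rpow {g : ℝ → ℝ} {κ a b p : ℝ} (hp : 0 < p)
    (hκ : 0 ≤ κ) (hab : a / p < b) (hg : ∀ s, 0 ≤ s → IntervalIntegrable g volume 0 s)
    (hbound : ∀ s, 1 ≤ s → g s * s ≤ κ + a * s ^ p) :
    ∃ K : ℝ, ∀ s, 0 ≤ s → ∫ x in (0 : ℝ)..s, g x ≤ K + b * s ^ p := by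
  obtain ⟨L, hL⟩ := exists_mul_log_le_add_mul_rpow hκ (sub_pos.2 hab) hp
  set M := ∫ x in (0 : ℝ)..1, |g x|
  have hunit : ∀ s, 0 ≤ s → s ≤ 1 → ∫ x in (0 : ℝ)..s, g x ≤ M := fun s hs hs1 ↦
    calc ∫ x in (0 : ℝ)..s, g x ≤ ∫ x in (0 : ℝ)..s, |g x| :=
          (le_abs_self _).trans (intervalIntegral.abs_integral_le_integral_abs hs)
      _ ≤ M := intervalIntegral.integral_mono_interval le_rfl hs hs1
          (.of_forall fun x ↦ abs_nonneg (g x)) (hg 1 zero_le_one).abs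
  refine ⟨max (M + |b|) (M + L - a / p), fun s hs ↦ ?_⟩
  rcases le_total s 1 with hs1 | hs1
  · have hpow : |b * s ^ p| ≤ |b| := by
      rw [abs_mul, abs_of_nonneg (Real.rpow_nonneg hs p)]
      exact mul_le_of_le_one_right (abs_nonneg b) (Real.rpow_le_one hs hs1 hp.le)
    linarith [hunit s hs hs1, neg_abs_le (b * s ^ p), le_max_left (M + |b|) (M + L - a / p)]
  · have hg_tail : IntervalIntegrable g volume 1 s := (hg 1 zero_le_one).symm.trans (hg s hs)
    have htail : ∫ x in (1 : ℝ)..s, g x ≤ κ * Real.log s + a / p * (s ^ p - 1) := by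
      simpa only [div_one, Real.one_rpow] using intervalIntegral_le_log_add_rpow hp.ne' one_pos hs1
        hg_tail fun x hx ↦ hbound x hx.1
    rw [← intervalIntegral.integral_add_adjacent_intervals (hg 1 zero_le_one) hg_tail]
    linarith [hunit 1 zero_le_one le_rfl, hL s (one_pos.trans_le hs1),
      le_max_right (M + |b|) (M + L - a / p)]

lemma exists_intervalIntegral_le_add_mul_abs_rpow {f : ℝ → ℝ} {κ a b p : ℝ} (hp : 0 < p)
    (hab : a / p < b) (hf : ∀ s, IntervalIntegrable f volume 0 s)
    (hbound : ∀ s, f s * s ≤ κ + a * |s| ^ p) :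
    ∃ K ≥ (0 : ℝ), ∀ s, ∫ x in (0 : ℝ)..s, f x ≤ K + b * |s| ^ p := by
  have hκ : 0 ≤ κ := by simpa [Real.zero_rpow hp.ne'] using hbound 0
  have hreflect : ∀ s, ∫ x in (0 : ℝ)..s, -f (-x) = ∫ x in (0 : ℝ)..(-s), f x := fun s ↦ by
    rw [intervalIntegral.integral_neg, intervalIntegral.integral_comp_neg, neg_zero,
      ← intervalIntegral.integral_symm]
  have hf_reflect : ∀ s, IntervalIntegrable (fun x ↦ f (-x)) volume 0 s := fun s ↦ by
    simpa only [neg_zero, neg_neg]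
      using (IntervalIntegrable.iff_comp_neg enorm_ne_top).1 (hf (-s))
  obtain ⟨K₁, hK₁⟩ := exists_intervalIntegral_le_add_mul_rpow hp hκ hab (fun s _ ↦ hf s)
    fun s hs ↦ by simpa only [abs_of_nonneg (zero_le_one.trans hs)] using hbound s
  obtain ⟨K₂, hK₂⟩ := exists_intervalIntegral_le_add_mul_rpow (g := fun x ↦ -f (-x)) hp hκ hab
    (fun s _ ↦ (hf_reflect s).neg)
    fun s hs ↦ by
      simpa only [mul_neg, neg_mul, abs_neg, abs_of_nonneg (zero_le_one.trans hs)]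
        using hbound (-s)
  have hK₁_nonneg : 0 ≤ K₁ := by simpa [Real.zero_rpow hp.ne'] using hK₁ 0 le_rfl
  refine ⟨max K₁ K₂, hK₁_nonneg.trans (le_max_left K₁ K₂), fun s ↦ ?_⟩
  rcases le_total 0 s with hs | hs
  · rw [abs_of_nonneg hs]
    linarith [hK₁ s hs, le_max_left K₁ K₂]
  · have h := hK₂ (-s) (neg_nonneg.2 hs)
    rw [hreflect, neg_neg] at h
    rw [abs_of_nonpos hs]
    linarith [le_max_right K₁ K₂]

lemma abs_le_add_mul_one_add {x y κ α β : ℝ} (hκ : 0 ≤ κ) (hα : 0 ≤ α) (hβ : 0 ≤ β) (hy : 0 ≤ y)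
    (hlow : -β * y - κ ≤ x) (hup : x ≤ κ - α * y) : |x| ≤ (κ + β) * (1 + y) := by
  have hαy := mul_nonneg hα hy
  have hβy := mul_nonneg hβ hy
  have hκy := mul_nonneg hκ hy
  exact abs_le.2 ⟨by linarith, by linarith⟩

theorem statement1_general (f : ℝ → ℝ) (hf : LocallyIntegrable f)
    (p κ α₁ α₂ : ℝ) (hp : 0 < p) (hα₁ : 0 < α₁)
    (hlow : ∀ s : ℝ, -κ - α₂ * |s| ^ p ≤ f s * s)
    (hup : ∀ s : ℝ, f s * s ≤ κ - α₁ * |s| ^ p)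
    (F : ℝ → ℝ) (hF : ∀ s : ℝ, F s = ∫ r in (0 : ℝ)..s, f r) :
    (∃ α₁' > (0 : ℝ), ∃ α₂' > (0 : ℝ), ∃ κ' ≥ (0 : ℝ),
      ∀ s : ℝ, -α₂' * |s| ^ p - κ' ≤ F s ∧ F s ≤ κ' - α₁' * |s| ^ p) ∧
    (∃ C > (0 : ℝ), ∀ s : ℝ, |F s| ≤ C * (1 + |s| ^ p)) := by
  obtain ⟨β₁, hβ₁, hβ₁_lt⟩ := exists_between (div_pos hα₁ hp)
  obtain ⟨β₂, hlt⟩ := exists_gt (max 0 (α₂ / p))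
  obtain ⟨hβ₂, hβ₂_gt⟩ := max_lt_iff.1 hlt
  have hint : ∀ s, IntervalIntegrable f volume 0 s := fun s ↦
    (hf.integrableOn_isCompact isCompact_uIcc).intervalIntegrable
  obtain ⟨K₁, hK₁, hF_le⟩ := exists_intervalIntegral_le_add_mul_abs_rpow
    (κ := κ) (a := -α₁) (b := -β₁) hp (by rwa [neg_div, neg_lt_neg_iff]) hint
    fun s ↦ by linarith [hup s]
  obtain ⟨K₂, hK₂, hF_ge⟩ := exists_intervalIntegral_le_add_mul_abs_rpow
    (f := fun x ↦ -f x) (κ := κ) hp hβ₂_gt (fun s ↦ (hint s).neg)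
    fun s ↦ by linarith [hlow s]
  simp only [intervalIntegral.integral_neg, ← hF] at hF_le hF_ge
  have hbounds : ∀ s, -β₂ * |s| ^ p - (K₁ + K₂) ≤ F s ∧ F s ≤ (K₁ + K₂) - β₁ * |s| ^ p := fun s ↦
    ⟨by linarith [hF_ge s], by linarith [hF_le s]⟩
  have hK : 0 ≤ K₁ + K₂ := add_nonneg hK₁ hK₂
  exact ⟨⟨β₁, hβ₁, β₂, hβ₂, K₁ + K₂, hK, hbounds⟩, K₁ + K₂ + β₂, by positivity, fun s ↦
    abs_le_add_mul_one_add hK hβ₁.le hβ₂.le (by positivity) (hbounds s).1 (hbounds s).2⟩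

/-- Under the dissipativity bounds on `f`, the primitive
`F(s) = ∫₀ˢ f(r) dr` satisfies `-α̃₂|s|^p - κ̃ ≤ F(s) ≤ κ̃ - α̃₁|s|^p` for some
`α̃₁, α̃₂ > 0`, `κ̃ ≥ 0`, and consequently `|F(s)| ≤ C̃(1 + |s|^p)` for some `C̃ > 0`. -/
theorem statement1 (f : ℝ → ℝ) (hf : Continuous f)
    (p κ α₁ α₂ : ℝ) (hp : 2 ≤ p) (hκ : 0 ≤ κ) (hα₁ : 0 < α₁) (hα₂ : 0 < α₂)
    (hlow : ∀ s : ℝ, -κ - α₂ * |s| ^ p ≤ f s * s)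
    (hup : ∀ s : ℝ, f s * s ≤ κ - α₁ * |s| ^ p)
    (F : ℝ → ℝ) (hF : ∀ s : ℝ, F s = ∫ r in (0 : ℝ)..s, f r) :
    (∃ α₁' > (0 : ℝ), ∃ α₂' > (0 : ℝ), ∃ κ' ≥ (0 : ℝ),
      ∀ s : ℝ, -α₂' * |s| ^ p - κ' ≤ F s ∧ F s ≤ κ' - α₁' * |s| ^ p) ∧
    (∃ C > (0 : ℝ), ∀ s : ℝ, |F s| ≤ C * (1 + |s| ^ p)) :=
  statement1_general f hf.locallyIntegrable p κ α₁ α₂ (two_pos.trans_le hp) hα₁ hlow hup F hF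
end

section
/- Let (X,d) be a metric space and R ⊆ C([0,∞); X). If R satisfies (K1) and (K2), then every fixed point of R (a point z such that the constant map t ↦ z belongs to R) is a stationary point of G, i.e. z ∈ G(t,z) for all t ≥ 0. If R satisfies (K1)–(K4), then the fixed points of R and the stationary points of G coincide: z ∈ G(t,z) for all t ≥ 0 if and only if the constant map t ↦ z belongs to R. -/
/-!
Suppose `z ∈ G(t, z)` for all `t`. Concatenating copies of a loop of length `1 / n!` at `z` yields
trajectories `χₙ` that sit at `z` at every multiple of `1 / n!` up to time `n`, so each rational
time is eventually among the sampling times of `χₙ`. A pointwise limit of a subsequence is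
therefore equal to `z` at all rational times, and by continuity it is the constant trajectory.
-/

open scoped NNReal
open Filter

/-- The multivalued map associated with a family `R` of trajectories:
`G(t,x) = {φ(t) : φ ∈ R, φ(0) = x}`. -/
def msemiflowOf {X : Type*} (R : Set (ℝ≥0 → X)) (t : ℝ≥0) (x : X) : Set X :=
  {y | ∃ φ ∈ R, φ 0 = x ∧ φ t = y}

/-- (K1): for every `x` there is a trajectory starting at `x`. -/
def CondK1 {X : Type*} (R : Set (ℝ≥0 → X)) : Prop := ∀ x : X, ∃ φ ∈ R, φ 0 = x

/-- (K2): translation property. -/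
def CondK2 {X : Type*} (R : Set (ℝ≥0 → X)) : Prop :=
  ∀ φ ∈ R, ∀ τ : ℝ≥0, (fun t => φ (t + τ)) ∈ R

/-- (K3): concatenation property. -/
def CondK3 {X : Type*} (R : Set (ℝ≥0 → X)) : Prop :=
  ∀ φ₁ ∈ R, ∀ φ₂ ∈ R, ∀ s : ℝ≥0, 0 < s → φ₂ 0 = φ₁ s →
    (fun t => if t ≤ s then φ₁ t else φ₂ (t - s)) ∈ R

/-- (K4): compactness property. -/
def CondK4 {X : Type*} [MetricSpace X] (R : Set (ℝ≥0 → X)) : Prop :=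
  ∀ (φ : ℕ → ℝ≥0 → X) (x₀ : X), (∀ n, φ n ∈ R) →
    Tendsto (fun n => φ n 0) atTop (nhds x₀) →
    ∃ ψ : ℕ → ℕ, StrictMono ψ ∧ ∃ φ' ∈ R,
      ∀ t : ℝ≥0, Tendsto (fun k => φ (ψ k) t) atTop (nhds (φ' t))

theorem denseRange_nnratCast : DenseRange ((↑) : ℚ≥0 → ℝ≥0) := by
  refine dense_of_exists_between fun a b hab => ?_
  obtain ⟨q, hq, haq, hqb⟩ := (NNReal.lt_iff_exists_rat_btwn a b).mp hab
  lift q to ℚ≥0 using hq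
  have hcast : Real.toNNReal (q : ℚ) = q := by
    rw [Rat.cast_nnratCast]
    exact Real.toNNReal_coe (r := (q : ℝ≥0))
  exact ⟨q, ⟨q, rfl⟩, hcast ▸ haq, hcast ▸ hqb⟩

theorem eventually_exists_nsmul_inv_factorial_eq (q : ℚ≥0) :
    ∀ᶠ n : ℕ in atTop, ∃ k ≤ n * n.factorial, k • (n.factorial : ℝ≥0)⁻¹ = q := by
  filter_upwards [eventually_ge_atTop q.num, eventually_ge_atTop q.den] with n hnum hden
  obtain ⟨m, hm⟩ := Nat.dvd_factorial q.den_pos hden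
  have hm_le : m ≤ n.factorial := hm ▸ Nat.le_mul_of_pos_left m q.den_pos
  refine ⟨q.num * m, Nat.mul_le_mul hnum hm_le, ?_⟩
  have hm_ne : (m : ℝ≥0) ≠ 0 := by
    intro h
    simp [Nat.cast_eq_zero.mp h, n.factorial_ne_zero] at hm
  rw [hm, NNRat.cast_def, nsmul_eq_mul, ← div_eq_mul_inv, Nat.cast_mul, Nat.cast_mul,
    mul_div_mul_right _ _ hm_ne]

theorem eq_const_of_denseRange {ι Y X : Type*} [TopologicalSpace Y] [TopologicalSpace X] [T1Space X]
    {e : ι → Y} (he : DenseRange e) {f : Y → X} (hf : Continuous f) {z : X}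
    (h : ∀ i, f (e i) = z) : f = fun _ => z :=
  funext <| isClosed_property he (isClosed_singleton.preimage hf) h

section Trajectories

variable {X : Type*} {R : Set (ℝ≥0 → X)} {z : X}

theorem mem_msemiflowOf_of_const_mem (hz : (fun _ => z) ∈ R) (t : ℝ≥0) : z ∈ msemiflowOf R t z :=
  ⟨_, hz, rfl, rfl⟩

theorem CondK3.exists_concat (h3 : CondK3 R) {φ₁ φ₂ : ℝ≥0 → X} (h₁ : φ₁ ∈ R) (h₂ : φ₂ ∈ R)
    {s : ℝ≥0} (h : φ₂ 0 = φ₁ s) :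
    ∃ χ ∈ R, (∀ t ≤ s, χ t = φ₁ t) ∧ ∀ t, χ (t + s) = φ₂ t := by
  rcases eq_zero_or_pos s with rfl | hs
  · exact ⟨φ₂, h₂, fun t ht => by rw [nonpos_iff_eq_zero.mp ht, h], fun t => by rw [add_zero]⟩
  refine ⟨_, h3 φ₁ h₁ φ₂ h₂ s hs h, fun t ht => if_pos ht, fun t => ?_⟩
  rcases eq_or_ne t 0 with rfl | ht
  · simp [h]
  · have hlt : ¬t + s ≤ s := by simpa using ht
    simp [hlt]

theorem CondK3.exists_forall_nsmul_eq (h3 : CondK3 R) {d : ℝ≥0} (hz : z ∈ msemiflowOf R d z)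
    (N : ℕ) : ∃ χ ∈ R, ∀ k ≤ N, χ (k • d) = z := by
  obtain ⟨φ, hφ, hφ_zero, hφ_d⟩ := hz
  induction N with
  | zero => exact ⟨φ, hφ, by simpa using hφ_zero⟩
  | succ N ih =>
    obtain ⟨χ, hχ, hχ_eq⟩ := ih
    have hχ_zero : χ 0 = z := by simpa using hχ_eq 0 N.zero_le
    obtain ⟨ψ, hψ, hψ_le, hψ_add⟩ := h3.exists_concat hφ hχ (hχ_zero.trans hφ_d.symm)
    refine ⟨ψ, hψ, fun k hk => ?_⟩
    cases k with
    | zero => simpa [hφ_zero] using hψ_le 0 zero_le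
    | succ k => rw [succ_nsmul, hψ_add, hχ_eq k (Nat.le_of_succ_le_succ hk)]

theorem CondK3.exists_seq_eventually_nnratCast_eq (h3 : CondK3 R)
    (hz : ∀ t, z ∈ msemiflowOf R t z) :
    ∃ χ : ℕ → ℝ≥0 → X, (∀ n, χ n ∈ R ∧ χ n 0 = z) ∧ ∀ q : ℚ≥0, ∀ᶠ n in atTop, χ n q = z := by
  have hsample (n : ℕ) :=
    h3.exists_forall_nsmul_eq (hz (n.factorial : ℝ≥0)⁻¹) (n * n.factorial)
  choose χ hχ hχ_eq using hsample
  refine ⟨χ, fun n => ⟨hχ n, by simpa using hχ_eq n 0 (Nat.zero_le _)⟩, fun q => ?_⟩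
  filter_upwards [eventually_exists_nsmul_inv_factorial_eq q] with n ⟨k, hk, hkq⟩
  rw [← hkq, hχ_eq n k hk]

theorem CondK4.isSeqCompact [MetricSpace X] (h4 : CondK4 R) (z : X) :
    IsSeqCompact {φ ∈ R | φ 0 = z} := by
  intro χ hχ
  have hχ_zero : Tendsto (fun n => χ n 0) atTop (nhds z) :=
    tendsto_const_nhds.congr fun n => (hχ n).2.symm
  obtain ⟨ψ, hψ, φ, hφ, hlim⟩ := h4 χ z (fun n => (hχ n).1) hχ_zero
  have hφ_zero : φ 0 = z := tendsto_nhds_unique (hlim 0) (hχ_zero.comp hψ.tendsto_atTop)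
  exact ⟨φ, ⟨hφ, hφ_zero⟩, ψ, hψ, tendsto_pi_nhds.mpr hlim⟩

theorem statement13_general [TopologicalSpace X] [T1Space X] (hRc : ∀ φ ∈ R, Continuous φ)
    (h3 : CondK3 R) (hcpt : IsSeqCompact {φ ∈ R | φ 0 = z}) :
    (∀ t, z ∈ msemiflowOf R t z) ↔ (fun _ => z) ∈ R := by
  refine ⟨fun hz => ?_, mem_msemiflowOf_of_const_mem⟩
  obtain ⟨χ, hχ, hχ_eq⟩ := h3.exists_seq_eventually_nnratCast_eq hz
  obtain ⟨φ, ⟨hφ, -⟩, ψ, hψ, hlim⟩ := hcpt hχ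
  have hφ_eq (q : ℚ≥0) : φ q = z := by
    have hconst : (fun n => χ (ψ n) q) =ᶠ[atTop] fun _ => z :=
      hψ.tendsto_atTop.eventually (hχ_eq q)
    exact (tendsto_const_nhds_iff.mp ((tendsto_pi_nhds.mp hlim q).congr' hconst)).symm
  exact eq_const_of_denseRange denseRange_nnratCast (hRc φ hφ) hφ_eq ▸ hφ

end Trajectories

/-- If `R` satisfies (K1), (K2), then every fixed point of `R`
(a point `z` with the constant map `t ↦ z` in `R`) is a stationary point of `G`
(`z ∈ G(t,z)` for all `t ≥ 0`). If `R` satisfies (K1)–(K4), then the fixed points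
of `R` and the stationary points of `G` coincide. -/
theorem statement13 {X : Type*} [MetricSpace X] (R : Set (ℝ≥0 → X))
    (hRc : ∀ φ ∈ R, Continuous φ) :
    (CondK1 R → CondK2 R →
      ∀ z : X, (fun _ : ℝ≥0 => z) ∈ R → ∀ t : ℝ≥0, z ∈ msemiflowOf R t z) ∧
    (CondK1 R → CondK2 R → CondK3 R → CondK4 R →
      ∀ z : X, ((∀ t : ℝ≥0, z ∈ msemiflowOf R t z) ↔ (fun _ : ℝ≥0 => z) ∈ R)) :=
  ⟨fun _ _ _ hz => mem_msemiflowOf_of_const_mem hz,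
    fun _ _ h3 h4 z => statement13_general hRc h3 (h4.isSeqCompact z)⟩
end

section
/- Let (X,d) be a metric space and G a strict multivalued semiflow on X. Let A ⊆ X be closed, negatively invariant (A ⊆ G(τ,A) for all τ ≥ 0), and such that dist_X(G(t,A), A) → 0 as t → +∞, where dist_X is the Hausdorff semidistance. Then A is positively invariant: G(t,A) ⊆ A for all t ≥ 0, hence A is strictly invariant. -/
open scoped NNReal ENNReal
open Filter

/-- `G(t,B) = ⋃_{y ∈ B} G(t,y)`. -/
def imageSet {X : Type*} (G : ℝ≥0 → X → Set X) (t : ℝ≥0) (B : Set X) : Set X :=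
  ⋃ y ∈ B, G t y

/-- The Hausdorff semidistance `dist_X(C,D) = sup_{c ∈ C} inf_{d ∈ D} d(c,d)`
(valued in `ℝ≥0∞`). -/
noncomputable def hausSemidist {X : Type*} [MetricSpace X] (C D : Set X) : ℝ≥0∞ :=
  ⨆ c ∈ C, EMetric.infEdist c D

/-! Negative invariance gives `G(s,A) ⊆ G(s,G(t-s,A)) ⊆ G(t,A)` for `s ≤ t`, so the sets `G(t,A)`
increase with `t`, and so does `dist_X(G(t,A),A)`. An increasing function with limit `0` is
nonpositive, so every `G(t,A)` lies at semidistance `0` from `A`, that is, in the closure of `A`. -/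

section ImageSet

variable {X : Type*} {G : ℝ≥0 → X → Set X}

lemma imageSet_mono (t : ℝ≥0) {B C : Set X} (h : B ⊆ C) : imageSet G t B ⊆ imageSet G t C :=
  Set.biUnion_subset_biUnion_left h

lemma imageSet_imageSet (s t : ℝ≥0) (B : Set X) :
    imageSet G s (imageSet G t B) = ⋃ x ∈ B, imageSet G s (G t x) := by
  simp only [imageSet, Set.biUnion_iUnion]

lemma imageSet_imageSet_subset (hG : ∀ (t s : ℝ≥0) (x : X), imageSet G t (G s x) ⊆ G (t + s) x)
    (t s : ℝ≥0) (B : Set X) : imageSet G t (imageSet G s B) ⊆ imageSet G (t + s) B := by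
  rw [imageSet_imageSet]
  exact Set.iUnion₂_mono fun x _ => hG t s x

lemma monotone_imageSet_of_subset_imageSet
    (hG : ∀ (t s : ℝ≥0) (x : X), imageSet G t (G s x) ⊆ G (t + s) x) {A : Set X}
    (hneg : ∀ τ : ℝ≥0, A ⊆ imageSet G τ A) : Monotone fun t => imageSet G t A := by
  intro s t hst
  calc imageSet G s A ⊆ imageSet G s (imageSet G (t - s) A) := imageSet_mono s (hneg (t - s))
    _ ⊆ imageSet G (s + (t - s)) A := imageSet_imageSet_subset hG s (t - s) A
    _ = imageSet G t A := by rw [add_tsub_cancel_of_le hst]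

end ImageSet

section HausSemidist

variable {X : Type*} [MetricSpace X]

lemma hausSemidist_eq_iSup_infEDist (C D : Set X) :
    hausSemidist C D = ⨆ c ∈ C, Metric.infEDist c D :=
  rfl

lemma hausSemidist_mono_left (D : Set X) : Monotone fun C => hausSemidist C D :=
  fun _ _ h => biSup_mono h

lemma hausSemidist_eq_zero_iff_subset_closure {C D : Set X} :
    hausSemidist C D = 0 ↔ C ⊆ closure D := by
  simp only [hausSemidist_eq_iSup_infEDist, ENNReal.iSup_eq_zero, Set.subset_def,
    Metric.mem_closure_iff_infEDist_zero]

end HausSemidist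

theorem statement16_general {X : Type*} [MetricSpace X] (G : ℝ≥0 → X → Set X)
    (hG : ∀ (t s : ℝ≥0) (x : X), imageSet G t (G s x) ⊆ G (t + s) x)
    (A : Set X) (hA : IsClosed A)
    (hneg : ∀ τ : ℝ≥0, A ⊆ imageSet G τ A)
    (hattr : Tendsto (fun t : ℝ≥0 => hausSemidist (imageSet G t A) A) atTop (nhds 0)) :
    ∀ t : ℝ≥0, imageSet G t A ⊆ A := by
  intro t
  have hmono : Monotone fun t => hausSemidist (imageSet G t A) A :=
    (hausSemidist_mono_left A).comp (monotone_imageSet_of_subset_imageSet hG hneg)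
  have hzero : hausSemidist (imageSet G t A) A = 0 := le_zero_iff.mp (hmono.ge_of_tendsto hattr t)
  exact (hausSemidist_eq_zero_iff_subset_closure.mp hzero).trans hA.closure_subset

/-- For a strict multivalued semiflow `G`, if `A` is closed,
negatively invariant (`A ⊆ G(τ,A)` for all `τ ≥ 0`) and
`dist_X(G(t,A),A) → 0` as `t → ∞`, then `A` is positively invariant:
`G(t,A) ⊆ A` for all `t ≥ 0` (hence strictly invariant). -/
theorem statement16 {X : Type*} [MetricSpace X] (G : ℝ≥0 → X → Set X)
    (hne : ∀ (t : ℝ≥0) (x : X), (G t x).Nonempty)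
    (hG0 : ∀ x : X, G 0 x = {x})
    (hstrict : ∀ (t s : ℝ≥0) (x : X), G (t + s) x = imageSet G t (G s x))
    (A : Set X) (hA : IsClosed A)
    (hneg : ∀ τ : ℝ≥0, A ⊆ imageSet G τ A)
    (hattr : Tendsto (fun t : ℝ≥0 => hausSemidist (imageSet G t A) A)
      atTop (nhds 0)) :
    ∀ t : ℝ≥0, imageSet G t A ⊆ A := by
  exact statement16_general G (fun t s x => (hstrict t s x).ge) A hA hneg hattr
end

section
/- Let (X,d) be a metric space and R ⊆ C([0,∞); X) satisfy (K1), (K2) and (K4), and let G(t,x) = {φ(t) : φ ∈ R, φ(0) = x} be the induced multivalued semiflow. Assume G possesses a compact global attractor A (a compact negatively invariant set attracting every bounded set). Then A = {γ(0) : γ ∈ K} = ⋃_{t∈ℝ} {γ(t) : γ ∈ K}, where K denotes the set of all complete trajectories of R that are bounded in X. -/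
open scoped NNReal ENNReal
open Filter Bornology

/-- `G(t,B) = ⋃_{y ∈ B} G(t,y)`. -/
def msemiflowOfSet {X : Type*} (R : Set (ℝ≥0 → X)) (t : ℝ≥0) (B : Set X) : Set X :=
  ⋃ y ∈ B, msemiflowOf R t y

/-- `γ : ℝ → X` is a bounded complete trajectory of `R`:
`γ(·+h)|_{[0,∞)} ∈ R` for every `h ∈ ℝ` and its range is bounded in `X`. -/
def BddCompleteTraj {X : Type*} [MetricSpace X] (R : Set (ℝ≥0 → X)) (γ : ℝ → X) : Prop :=
  (∀ h : ℝ, (fun t : ℝ≥0 => γ ((t : ℝ) + h)) ∈ R) ∧ IsBounded (Set.range γ)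

/-!
A bounded complete trajectory `γ` reaches the point `γ t` after time `n` from `γ (t - n)`, a point
of its bounded range, so `γ t` lies at distance zero from the attractor `A`. Conversely, negative
invariance writes a point of `A` as `φₙ(n)` with `φₙ ∈ R` starting in `A`. The translates
`s ↦ φₙ(s + n)` are trajectories on ever longer time intervals and are attracted by `A`, so (K4)
and a diagonal argument give a subsequence converging pointwise on all of `ℝ`; its limit is a
complete trajectory with values in `A`. Gluing together trajectories of length one would not do,
because `R` need not be closed under concatenation.
-/

open Topology

section Extraction

variable {ι : Type*} {F G H : Filter ι}

/-- `IsExtraction G F` is the filter form of passing to a subsequence: `G` is a nontrivial countably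
generated filter finer than `F`. A decreasing sequence of extractions has its infimum as an
extraction, which replaces the diagonal subsequence. -/
structure IsExtraction (G F : Filter ι) : Prop where
  le : G ≤ F
  neBot : G.NeBot
  isCountablyGenerated : G.IsCountablyGenerated

namespace IsExtraction

theorem refl (F : Filter ι) [F.NeBot] [F.IsCountablyGenerated] : IsExtraction F F :=
  ⟨le_rfl, ‹_›, ‹_›⟩

theorem trans (hHG : IsExtraction H G) (hGF : IsExtraction G F) : IsExtraction H F :=
  ⟨hHG.le.trans hGF.le, hHG.neBot, hHG.isCountablyGenerated⟩

theorem map_atTop {u : ℕ → ι} (hu : Tendsto u atTop F) : IsExtraction (map u atTop) F :=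
  ⟨hu, inferInstance, inferInstance⟩

theorem iInf_nat {S : ℕ → Filter ι} (hS : ∀ m, IsExtraction (S m) F) (hanti : Antitone S) :
    IsExtraction (⨅ m, S m) F :=
  have (m : ℕ) := (hS m).isCountablyGenerated
  ⟨(iInf_le S 0).trans (hS 0).le,
    iInf_neBot_of_directed' hanti.directed_ge fun m => (hS m).neBot, inferInstance⟩

theorem exists_forall_nat [F.NeBot] [F.IsCountablyGenerated] {q : ℕ → Filter ι → Prop}
    (hq : ∀ m, Antitone (q m))
    (hstep : ∀ m G, IsExtraction G F → ∃ H, IsExtraction H G ∧ q m H) :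
    ∃ G, IsExtraction G F ∧ ∀ m, q m G := by
  choose! next hnext hqnext using hstep
  let S : ℕ → Filter ι := Nat.rec F next
  have hS (m : ℕ) : IsExtraction (S m) F := by
    induction m with
    | zero => exact refl F
    | succ m ih => exact (hnext m _ ih).trans ih
  have hanti : Antitone S := antitone_nat_of_succ_le fun m => (hnext m _ (hS m)).le
  exact ⟨⨅ m, S m, iInf_nat hS hanti,
    fun m => hq m (iInf_le S (m + 1)) (hqnext m _ (hS m))⟩

end IsExtraction

end Extraction

section NhdsSet

variable {ι X : Type*} [TopologicalSpace X] {F : Filter ι} [F.NeBot] {K : Set X} {u : ι → X}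

theorem exists_isExtraction_tendsto_of_tendsto_nhdsSet [FirstCountableTopology X]
    [F.IsCountablyGenerated] (hK : IsCompact K) (hu : Tendsto u F (𝓝ˢ K)) :
    ∃ a ∈ K, ∃ G, IsExtraction G F ∧ Tendsto u G (𝓝 a) := by
  obtain ⟨a, ha, hcluster⟩ : ∃ a ∈ K, MapClusterPt a F u := by
    have hndisj : ¬ Disjoint (𝓝ˢ K) (map u F) := fun h => NeBot.ne inferInstance (h.eq_bot_of_ge hu)
    simpa only [hK.disjoint_nhdsSet_left, not_forall, exists_prop, disjoint_iff, ← ne_eq,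
      ← neBot_iff, MapClusterPt, ClusterPt] using hndisj
  exact ⟨a, ha, F ⊓ comap u (𝓝 a),
    ⟨inf_le_left, neBot_inf_comap_iff_map.2 (inf_comm (𝓝 a) _ ▸ hcluster), inferInstance⟩,
    tendsto_comap.mono_left inf_le_right⟩

theorem mem_of_tendsto_nhdsSet [T2Space X] {x : X} (hK : IsCompact K)
    (hu : Tendsto u F (𝓝ˢ K)) (hx : Tendsto u F (𝓝 x)) : x ∈ K :=
  by_contra fun hxK => hu.not_tendsto (hK.disjoint_nhdsSet_nhds hxK) hx

end NhdsSet

section Trajectories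

variable {ι X : Type*}

theorem mem_msemiflowOfSet {R : Set (ℝ≥0 → X)} {B : Set X} {t : ℝ≥0} {x : X} :
    x ∈ msemiflowOfSet R t B ↔ ∃ φ ∈ R, φ 0 ∈ B ∧ φ t = x := by
  simp only [msemiflowOfSet, msemiflowOf, Set.mem_iUnion, Set.mem_ofPred_eq, exists_prop]
  constructor
  · rintro ⟨_, hB, φ, hφ, rfl, hx⟩
    exact ⟨φ, hφ, hB, hx⟩
  · rintro ⟨φ, hφ, hB, hx⟩
    exact ⟨φ 0, hB, φ, hφ, rfl, hx⟩

/-- Condition (K2): `R` is invariant under forward translation in time. -/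
def IsTranslationInvariant (R : Set (ℝ≥0 → X)) : Prop :=
  ∀ φ ∈ R, ∀ τ : ℝ≥0, (fun t => φ (t + τ)) ∈ R

theorem IsTranslationInvariant.eventually_translate_mem {R : Set (ℝ≥0 → X)}
    (hR : IsTranslationInvariant R) {φ : ℕ → ℝ≥0 → X} (hφ : ∀ n, φ n ∈ R) (h : ℝ) :
    ∀ᶠ n : ℕ in atTop, (fun t : ℝ≥0 => φ n (t + h + n).toNNReal) ∈ R := by
  filter_upwards [eventually_ge_atTop ⌈-h⌉₊] with n hn
  have hhn : 0 ≤ h + n := by linarith [Nat.ceil_le.1 hn]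
  convert hR (φ n) (hφ n) (h + n).toNNReal using 3 with t
  rw [add_assoc, Real.toNNReal_add t.coe_nonneg hhn, Real.toNNReal_coe]

variable [TopologicalSpace X]

/-- Condition (K4): a sequence in `R` whose initial values converge has a subsequence converging
pointwise to an element of `R`. -/
def HasConvergentSubseqs (R : Set (ℝ≥0 → X)) : Prop :=
  ∀ (φ : ℕ → ℝ≥0 → X) (x₀ : X), (∀ n, φ n ∈ R) → Tendsto (fun n => φ n 0) atTop (𝓝 x₀) →
    ∃ ψ : ℕ → ℕ, StrictMono ψ ∧ ∃ φ' ∈ R, ∀ t, Tendsto (fun k => φ (ψ k) t) atTop (𝓝 (φ' t))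

namespace HasConvergentSubseqs

variable {R : Set (ℝ≥0 → X)} {F : Filter ι} [F.NeBot] [F.IsCountablyGenerated]

theorem exists_isExtraction (hR : HasConvergentSubseqs R) {Φ : ι → ℝ≥0 → X} {x : X}
    (hΦ : ∀ᶠ i in F, Φ i ∈ R) (hx : Tendsto (fun i => Φ i 0) F (𝓝 x)) :
    ∃ G, IsExtraction G F ∧ ∃ φ ∈ R, ∀ t, Tendsto (fun i => Φ i t) G (𝓝 (φ t)) := by
  obtain ⟨u, hu, huR⟩ := exists_seq_forall_of_frequently hΦ.frequently
  obtain ⟨ψ, hψ, φ, hφ, hlim⟩ := hR (Φ ∘ u) x huR (hx.comp hu)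
  exact ⟨map (u ∘ ψ) atTop, .map_atTop (hu.comp hψ.tendsto_atTop), φ, hφ, hlim⟩

theorem exists_isExtraction_tendsto [FirstCountableTopology X] (hR : HasConvergentSubseqs R)
    {K : Set X} (hK : IsCompact K) {Γ : ι → ℝ → X}
    (hΓ : ∀ h : ℝ, ∀ᶠ i in F, (fun t : ℝ≥0 => Γ i (t + h)) ∈ R)
    (hΓK : ∀ s, Tendsto (fun i => Γ i s) F (𝓝ˢ K)) :
    ∃ G, IsExtraction G F ∧ ∃ γ : ℝ → X, ∀ s, Tendsto (fun i => Γ i s) G (𝓝 (γ s)) := by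
  let q (m : ℕ) (G : Filter ι) : Prop :=
    ∃ φ : ℝ≥0 → X, ∀ t : ℝ≥0, Tendsto (fun i => Γ i (t + -(m : ℝ))) G (𝓝 (φ t))
  have hq (m : ℕ) : Antitone (q m) := fun G H hGH ⟨φ, hφ⟩ => ⟨φ, fun t => (hφ t).mono_left hGH⟩
  have hstep (m : ℕ) (G : Filter ι) (hG : IsExtraction G F) : ∃ H, IsExtraction H G ∧ q m H := by
    have := hG.neBot
    have := hG.isCountablyGenerated
    obtain ⟨a, -, G', hG', ha⟩ :=
      exists_isExtraction_tendsto_of_tendsto_nhdsSet hK ((hΓK (-m)).mono_left hG.le)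
    have := hG'.neBot
    have := hG'.isCountablyGenerated
    obtain ⟨H, hH, φ, -, hφ⟩ := hR.exists_isExtraction ((hΓ (-m)).filter_mono (hG'.trans hG).le)
      (by simpa only [NNReal.coe_zero, zero_add] using ha)
    exact ⟨H, hH.trans hG', φ, hφ⟩
  obtain ⟨G, hG, hGq⟩ := IsExtraction.exists_forall_nat hq hstep
  have hlim (s : ℝ) : ∃ x, Tendsto (fun i => Γ i s) G (𝓝 x) := by
    obtain ⟨m, hm⟩ := exists_nat_ge (-s)
    obtain ⟨φ, hφ⟩ := hGq m
    have hsm : ((s + m).toNNReal : ℝ) + -(m : ℝ) = s := by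
      rw [Real.coe_toNNReal _ (by linarith), add_neg_cancel_right]
    exact ⟨φ (s + m).toNNReal, by simpa only [hsm] using hφ (s + m).toNNReal⟩
  choose γ hγ using hlim
  exact ⟨G, hG, γ, hγ⟩

theorem translate_mem_of_tendsto [T2Space X] (hR : HasConvergentSubseqs R) {Γ : ι → ℝ → X}
    {γ : ℝ → X} {h : ℝ} (hΓ : ∀ᶠ i in F, (fun t : ℝ≥0 => Γ i (t + h)) ∈ R)
    (hγ : ∀ s, Tendsto (fun i => Γ i s) F (𝓝 (γ s))) :
    (fun t : ℝ≥0 => γ (t + h)) ∈ R := by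
  obtain ⟨G, hG, φ, hφ, hlim⟩ := hR.exists_isExtraction hΓ (hγ _)
  have := hG.neBot
  have hφγ : φ = fun t : ℝ≥0 => γ (t + h) :=
    funext fun t => tendsto_nhds_unique (hlim t) ((hγ _).mono_left hG.le)
  exact hφγ ▸ hφ

end HasConvergentSubseqs

end Trajectories

section Attractor

variable {ι X : Type*} [MetricSpace X] {R : Set (ℝ≥0 → X)} {A B : Set X}

/-- `A` attracts `B` under the multivalued semiflow of `R`. -/
def Attracts (R : Set (ℝ≥0 → X)) (A B : Set X) : Prop :=
  Tendsto (fun t => hausSemidist (msemiflowOfSet R t B) A) atTop (𝓝 0)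

theorem Attracts.tendsto_nhdsSet (hAB : Attracts R A B) (hA : IsCompact A) {F : Filter ι}
    {φ : ι → ℝ≥0 → X} {τ : ι → ℝ≥0} (hφ : ∀ i, φ i ∈ R) (hφB : ∀ i, φ i 0 ∈ B)
    (hτ : Tendsto τ F atTop) : Tendsto (fun i => φ i (τ i)) F (𝓝ˢ A) := by
  refine (Metric.hasBasis_nhdsSet_thickening hA).tendsto_right_iff.2 fun δ hδ => ?_
  filter_upwards [(hAB.comp hτ).eventually_lt_const (ENNReal.ofReal_pos.2 hδ)] with i hi
  have hmem : φ i (τ i) ∈ msemiflowOfSet R (τ i) B :=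
    mem_msemiflowOfSet.2 ⟨φ i, hφ i, hφB i, rfl⟩
  exact (le_iSup₂ (f := fun c _ => Metric.infEDist c A) _ hmem).trans_lt hi

theorem BddCompleteTraj.mem_of_attracts {γ : ℝ → X} (hγ : BddCompleteTraj R γ)
    (hA : IsCompact A) (hattr : Attracts R A (Set.range γ)) (t : ℝ) : γ t ∈ A := by
  have hlim := hattr.tendsto_nhdsSet hA (φ := fun (n : ℕ) s => γ (s + (t - n)))
    (fun n => hγ.1 (t - n)) (fun n => Set.mem_range_self _) tendsto_natCast_atTop_atTop
  simp only [NNReal.coe_natCast, add_sub_cancel] at hlim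
  exact mem_of_tendsto_nhdsSet hA hlim tendsto_const_nhds

theorem exists_bddCompleteTraj_of_mem (hK2 : IsTranslationInvariant R)
    (hK4 : HasConvergentSubseqs R) (hA : IsCompact A) (hneg : ∀ t, A ⊆ msemiflowOfSet R t A)
    (hattr : Attracts R A A) {a : X} (ha : a ∈ A) :
    ∃ γ : ℝ → X, BddCompleteTraj R γ ∧ γ 0 = a := by
  choose φ hφ hφA hφa using fun n : ℕ => mem_msemiflowOfSet.1 (hneg n ha)
  let Γ (n : ℕ) (s : ℝ) : X := φ n (s + n).toNNReal
  have hΓ (h : ℝ) : ∀ᶠ n in atTop, (fun t : ℝ≥0 => Γ n (t + h)) ∈ R :=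
    hK2.eventually_translate_mem hφ h
  have hΓA (s : ℝ) : Tendsto (fun n => Γ n s) atTop (𝓝ˢ A) :=
    hattr.tendsto_nhdsSet hA hφ hφA <| tendsto_real_toNNReal_atTop.comp <|
      tendsto_atTop_add_const_left _ s tendsto_natCast_atTop_atTop
  obtain ⟨G, hG, γ, hγ⟩ := hK4.exists_isExtraction_tendsto hA hΓ hΓA
  have := hG.neBot
  have := hG.isCountablyGenerated
  have hγA (s : ℝ) : γ s ∈ A := mem_of_tendsto_nhdsSet hA ((hΓA s).mono_left hG.le) (hγ s)
  have hΓ0 (n : ℕ) : Γ n 0 = a := by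
    simp only [Γ, zero_add, Real.toNNReal_natCast, hφa]
  refine ⟨γ, ⟨fun h => ?_, hA.isBounded.subset (Set.range_subset_iff.2 hγA)⟩, ?_⟩
  · exact hK4.translate_mem_of_tendsto ((hΓ h).filter_mono hG.le) hγ
  · exact tendsto_nhds_unique (hγ 0) (by simp only [hΓ0, tendsto_const_nhds])

end Attractor

theorem statement19_general {X : Type*} [MetricSpace X] (R : Set (ℝ≥0 → X))
    (hK2 : IsTranslationInvariant R) (hK4 : HasConvergentSubseqs R)
    (A : Set X) (hA : IsCompact A) (hneg : ∀ t, A ⊆ msemiflowOfSet R t A)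
    (hattr : ∀ B, IsBounded B → Attracts R A B) :
    A = {x | ∃ γ : ℝ → X, BddCompleteTraj R γ ∧ γ 0 = x} ∧
    A = ⋃ t : ℝ, {x | ∃ γ : ℝ → X, BddCompleteTraj R γ ∧ γ t = x} := by
  have hexists (a : X) (ha : a ∈ A) : ∃ γ : ℝ → X, BddCompleteTraj R γ ∧ γ 0 = a :=
    exists_bddCompleteTraj_of_mem hK2 hK4 hA hneg (hattr A hA.isBounded) ha
  have hmem (γ : ℝ → X) (hγ : BddCompleteTraj R γ) (t : ℝ) : γ t ∈ A :=
    hγ.mem_of_attracts hA (hattr _ hγ.2) t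
  constructor
  · refine Set.Subset.antisymm hexists ?_
    rintro _ ⟨γ, hγ, rfl⟩
    exact hmem γ hγ 0
  · refine Set.Subset.antisymm (fun a ha => Set.mem_iUnion.2 ⟨0, hexists a ha⟩)
      (Set.iUnion_subset fun t => ?_)
    rintro _ ⟨γ, hγ, rfl⟩
    exact hmem γ hγ t

/-- If `R` satisfies (K1), (K2) and (K4) and the induced multivalued
semiflow `G` has a compact global attractor `A` (compact, negatively invariant,
attracting every bounded set), then
`A = {γ(0) : γ ∈ K} = ⋃_{t ∈ ℝ} {γ(t) : γ ∈ K}`, where `K` is the set of all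
bounded complete trajectories of `R`. -/
theorem statement19 {X : Type*} [MetricSpace X] (R : Set (ℝ≥0 → X))
    (hRc : ∀ φ ∈ R, Continuous φ)
    (hK1 : ∀ x : X, ∃ φ ∈ R, φ 0 = x)
    (hK2 : ∀ φ ∈ R, ∀ τ : ℝ≥0, (fun t => φ (t + τ)) ∈ R)
    (hK4 : ∀ (φ : ℕ → ℝ≥0 → X) (x₀ : X), (∀ n, φ n ∈ R) →
      Tendsto (fun n => φ n 0) atTop (nhds x₀) →
      ∃ ψ : ℕ → ℕ, StrictMono ψ ∧ ∃ φ' ∈ R,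
        ∀ t : ℝ≥0, Tendsto (fun k => φ (ψ k) t) atTop (nhds (φ' t)))
    (A : Set X) (hAcomp : IsCompact A)
    (hneg : ∀ t : ℝ≥0, A ⊆ msemiflowOfSet R t A)
    (hattr : ∀ B : Set X, IsBounded B →
      Tendsto (fun t : ℝ≥0 => hausSemidist (msemiflowOfSet R t B) A) atTop (nhds 0)) :
    A = {x | ∃ γ : ℝ → X, BddCompleteTraj R γ ∧ γ 0 = x} ∧
    A = ⋃ t : ℝ, {x | ∃ γ : ℝ → X, BddCompleteTraj R γ ∧ γ t = x} :=
  statement19_general R hK2 hK4 A hAcomp hneg hattr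
end
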